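/- Let F be a finite field and let B₁,…,B_k ∈ F^{m×n} be a linearly independent family of matrices generating a matrix rank-metric code C = span_F{B₁,…,B_k} that is column-nondegenerate and row-nondegenerate and faithful (every nonzero element of the associated column-system S has rank m). Then C contains a codeword of maximum possible rank, i.e., there exists M ∈ C with rank(M) = min{m,n}. -/

import Mathlib

open Matrix

section Defs

variable {K : Type*} [Field K]

/-- The row space of a matrix: the span of its rows in `K^b`. -/
noncomputable def rowSpace {a b : ℕ} (M : Matrix (Fin a) (Fin b) K) :
    Submodule K (Fin b → K) :=
  Submodule.span K (Set.range fun i => M i)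

/-- The column space of a matrix: the span of its columns in `K^a`. -/
noncomputable def colSpace {a b : ℕ} (M : Matrix (Fin a) (Fin b) K) :
    Submodule K (Fin a → K) :=
  Submodule.span K (Set.range fun j i => M i j)

/-- `Sc S U = {X ∈ S : colsp(X) ⊆ U}`, a subspace of the matrix space. -/
noncomputable def Sc {a b : ℕ} (S : Submodule K (Matrix (Fin a) (Fin b) K))
    (U : Submodule K (Fin a → K)) : Submodule K (Matrix (Fin a) (Fin b) K) where
  carrier := {X | X ∈ S ∧ colSpace X ≤ U}
  add_mem' := by
    rintro X Y ⟨hXS, hXU⟩ ⟨hYS, hYU⟩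
    refine ⟨S.add_mem hXS hYS, ?_⟩
    rw [colSpace, Submodule.span_le]
    rintro v ⟨j, rfl⟩
    have hx : (fun i => X i j) ∈ U := hXU (Submodule.subset_span ⟨j, rfl⟩)
    have hy : (fun i => Y i j) ∈ U := hYU (Submodule.subset_span ⟨j, rfl⟩)
    exact U.add_mem hx hy
  zero_mem' := by
    refine ⟨S.zero_mem, ?_⟩
    rw [colSpace, Submodule.span_le]
    rintro v ⟨j, rfl⟩
    exact U.zero_mem
  smul_mem' := by
    rintro c X ⟨hXS, hXU⟩
    refine ⟨S.smul_mem c hXS, ?_⟩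
    rw [colSpace, Submodule.span_le]
    rintro v ⟨j, rfl⟩
    exact U.smul_mem c (hXU (Submodule.subset_span ⟨j, rfl⟩))

/-- `Sr S U = {X ∈ S : rowsp(X) ⊆ U}`, a subspace of the matrix space. -/
noncomputable def Sr {a b : ℕ} (S : Submodule K (Matrix (Fin a) (Fin b) K))
    (U : Submodule K (Fin b → K)) : Submodule K (Matrix (Fin a) (Fin b) K) where
  carrier := {X | X ∈ S ∧ rowSpace X ≤ U}
  add_mem' := by
    rintro X Y ⟨hXS, hXU⟩ ⟨hYS, hYU⟩
    refine ⟨S.add_mem hXS hYS, ?_⟩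
    rw [rowSpace, Submodule.span_le]
    rintro v ⟨i, rfl⟩
    have hx : X i ∈ U := hXU (Submodule.subset_span ⟨i, rfl⟩)
    have hy : Y i ∈ U := hYU (Submodule.subset_span ⟨i, rfl⟩)
    exact U.add_mem hx hy
  zero_mem' := by
    refine ⟨S.zero_mem, ?_⟩
    rw [rowSpace, Submodule.span_le]
    rintro v ⟨i, rfl⟩
    exact U.zero_mem
  smul_mem' := by
    rintro c X ⟨hXS, hXU⟩
    refine ⟨S.smul_mem c hXS, ?_⟩
    rw [rowSpace, Submodule.span_le]
    rintro v ⟨i, rfl⟩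
    exact U.smul_mem c (hXU (Submodule.subset_span ⟨i, rfl⟩))

/-- Row support of a set of matrices: the sum of the row spaces of its elements. -/
noncomputable def rowSupport {a b : ℕ} (D : Submodule K (Matrix (Fin a) (Fin b) K)) :
    Submodule K (Fin b → K) :=
  ⨆ M ∈ D, rowSpace M

/-- Column support of a set of matrices: the sum of the column spaces of its elements. -/
noncomputable def colSupport {a b : ℕ} (D : Submodule K (Matrix (Fin a) (Fin b) K)) :
    Submodule K (Fin a → K) :=
  ⨆ M ∈ D, colSpace M

/-- The hyperplane `u^⊥ = {v : ∑ i, u i * v i = 0}`. -/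
noncomputable def perp {a : ℕ} (u : Fin a → K) : Submodule K (Fin a → K) where
  carrier := {v | ∑ i, u i * v i = 0}
  add_mem' := by
    intro v w hv hw
    simp only [Set.mem_setOf_eq, Pi.add_apply, mul_add, Finset.sum_add_distrib] at *
    simp [hv, hw]
  zero_mem' := by simp
  smul_mem' := by
    intro c v hv
    simp only [Set.mem_setOf_eq, Pi.smul_apply, smul_eq_mul] at *
    have : ∑ i, u i * (c * v i) = c * ∑ i, u i * v i := by
      rw [Finset.mul_sum]; congr 1; ext i; ring
    simp [this, hv]

/-- The orthogonal complement `U^⊥ = {v : ∀ u ∈ U, ∑ i, u i * v i = 0}`. -/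
noncomputable def perpSub {a : ℕ} (U : Submodule K (Fin a → K)) : Submodule K (Fin a → K) :=
  ⨅ u ∈ U, perp u

/-- The slices of the column-system: `(X l) i j = (B i) j l`. -/
def colSlices {m n k : ℕ} (B : Fin k → Matrix (Fin m) (Fin n) K) :
    Fin n → Matrix (Fin k) (Fin m) K :=
  fun l => Matrix.of fun i j => B i j l

/-- The slices of the row-system: `(Y j) l i = (B i) j l`. -/
def rowSlices {m n k : ℕ} (B : Fin k → Matrix (Fin m) (Fin n) K) :
    Fin m → Matrix (Fin n) (Fin k) K :=
  fun j => Matrix.of fun l i => B i j l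

/-- The linear map `u ↦ ∑ i, u i • B i` (i.e. `u ↦ m₁(T,u)`). -/
noncomputable def combMap {m n k : ℕ} (B : Fin k → Matrix (Fin m) (Fin n) K) :
    (Fin k → K) →ₗ[K] Matrix (Fin m) (Fin n) K where
  toFun u := ∑ i, u i • B i
  map_add' := by intro u v; simp [add_smul, Finset.sum_add_distrib]
  map_smul' := by intro c u; simp [smul_smul, Finset.smul_sum]

/-- The `t`-th row-generalized rank weight. -/
noncomputable def dRow {a b : ℕ} (C : Submodule K (Matrix (Fin a) (Fin b) K)) (t : ℕ) : ℕ :=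
  sInf {r | ∃ D : Submodule K (Matrix (Fin a) (Fin b) K),
    D ≤ C ∧ Module.finrank K D = t ∧ Module.finrank K (rowSupport D) = r}

/-- The `t`-th column-generalized rank weight. -/
noncomputable def dCol {a b : ℕ} (C : Submodule K (Matrix (Fin a) (Fin b) K)) (t : ℕ) : ℕ :=
  sInf {r | ∃ D : Submodule K (Matrix (Fin a) (Fin b) K),
    D ≤ C ∧ Module.finrank K D = t ∧ Module.finrank K (colSupport D) = r}

end Defs

/-- In a finite vector space of matrices, the members annihilating a vector `a` at which evaluation
is onto make up a fraction `1 / q ^ m` of the space. -/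
lemma card_annihilators_mul {F : Type*} [Field F] [Fintype F] {m n : ℕ}
    (C : Submodule F (Matrix (Fin m) (Fin n) F)) (a : Fin n → F)
    (h : ∀ y : Fin m → F, ∃ M ∈ C, M *ᵥ a = y) :
    Nat.card {M : C // M.1 *ᵥ a = 0} * Nat.card F ^ m = Nat.card C := by
  let f : C →ₗ[F] (Fin m → F) :=
    { toFun := fun M => M.1 *ᵥ a
      map_add' := fun M N => Matrix.add_mulVec _ _ _
      map_smul' := fun c M => Matrix.smul_mulVec _ _ _ }
  have hf : Function.Surjective f := fun y => by
    obtain ⟨M, hM, hy⟩ := h y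
    exact ⟨⟨M, hM⟩, hy⟩
  have hker := f.finrank_range_add_finrank_ker
  rw [LinearMap.range_eq_top.2 hf, finrank_top, Module.finrank_fin_fun] at hker
  have hcard : Nat.card {M : C // M.1 *ᵥ a = 0} = Nat.card (LinearMap.ker f) := rfl
  rw [hcard, Module.natCard_eq_pow_finrank (K := F) (V := LinearMap.ker f),
    Module.natCard_eq_pow_finrank (K := F) (V := C), ← hker, ← pow_add, add_comm]

lemma card_mulVec_eq_zero {F : Type*} [Field F] [Fintype F] {m n : ℕ}
    (M : Matrix (Fin m) (Fin n) F) :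
    Nat.card {a : Fin n → F // M *ᵥ a = 0} = Nat.card F ^ (n - M.rank) := by
  have hcard : Nat.card {a : Fin n → F // M *ᵥ a = 0} = Nat.card (LinearMap.ker M.mulVecLin) := rfl
  have hker := M.mulVecLin.finrank_range_add_finrank_ker
  rw [Module.finrank_fin_fun] at hker
  rw [hcard, Module.natCard_eq_pow_finrank (K := F), Matrix.rank]
  congr 1
  omega

/-- A space of matrices over a finite field which acts transitively at every nonzero vector
contains a matrix of full rank. -/
lemma exists_rank_eq_min_of_transitive {F : Type*} [Field F] [Fintype F] {m n : ℕ}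
    (C : Submodule F (Matrix (Fin m) (Fin n) F))
    (h : ∀ a : Fin n → F, a ≠ 0 → ∀ y : Fin m → F, ∃ M ∈ C, M *ᵥ a = y) :
    ∃ M ∈ C, M.rank = min m n := by
  classical
  have : Fintype C := Fintype.ofFinite C
  set q := Nat.card F with hq
  have hq2 : 2 ≤ q := Finite.one_lt_card
  have hswap : ∑ M : C, Nat.card {a : Fin n → F // M.1 *ᵥ a = 0} =
      ∑ a : Fin n → F, Nat.card {M : C // M.1 *ᵥ a = 0} := by
    simp only [Nat.card_eq_fintype_card, Fintype.card_subtype]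
    exact Finset.sum_card_bipartiteAbove_eq_sum_card_bipartiteBelow
      (fun (M : C) (a : Fin n → F) => M.1 *ᵥ a = 0)
  have hsum : ∑ M : C, q ^ (n - M.1.rank) * q ^ m < ∑ _M : C, (q ^ m + q ^ n) := by
    simp only [hq, ← card_mulVec_eq_zero]
    rw [← Finset.sum_mul, hswap, Finset.sum_mul, ← Finset.add_sum_erase _ _ (Finset.mem_univ 0),
      Finset.sum_congr rfl fun a ha => card_annihilators_mul C a (h a (Finset.ne_of_mem_erase ha))]
    have hpos : 0 < Nat.card C := Nat.card_pos
    have hqn : 0 < Nat.card F ^ n := by positivity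
    simp only [Finset.sum_const, Finset.card_erase_of_mem (Finset.mem_univ _), Finset.card_univ,
      smul_eq_mul, Matrix.mulVec_zero, ← Nat.card_eq_fintype_card, Nat.card_fun, Nat.card_fin,
      Nat.card_congr (Equiv.subtypeUnivEquiv fun _ : C => trivial)]
    rw [mul_add, mul_comm (Nat.card F ^ n - 1)]
    gcongr
    omega
  obtain ⟨M, -, hM⟩ := Finset.exists_lt_of_sum_lt hsum
  refine ⟨M.1, M.2, ?_⟩
  have hlt : q ^ (n - M.1.rank + m) < q ^ (max m n + 1) := by
    have h₁ : q ^ m ≤ q ^ max m n := Nat.pow_le_pow_right (by omega) (le_max_left _ _)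
    have h₂ : q ^ n ≤ q ^ max m n := Nat.pow_le_pow_right (by omega) (le_max_right _ _)
    have h₃ : q ^ max m n * 2 ≤ q ^ max m n * q := Nat.mul_le_mul_left _ hq2
    rw [pow_add, pow_succ]
    omega
  have hexp := (Nat.pow_lt_pow_iff_right hq2).1 hlt
  have hrm : M.1.rank ≤ m := M.1.rank_le_height
  have hrn : M.1.rank ≤ n := M.1.rank_le_width
  omega

lemma sum_smul_colSlices_apply {K : Type*} [Field K] {m n k : ℕ}
    (B : Fin k → Matrix (Fin m) (Fin n) K) (a : Fin n → K) (i : Fin k) :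
    (∑ l, a l • colSlices B l) i = B i *ᵥ a := by
  ext j
  simp [Matrix.sum_apply, colSlices, Matrix.mulVec, dotProduct, mul_comm]

/-- A vector annihilated by every member of a code with full row support is zero. -/
lemma eq_zero_of_rowSupport_eq_top {K : Type*} [Field K] {m n : ℕ}
    {C : Submodule K (Matrix (Fin m) (Fin n) K)} (hC : rowSupport C = ⊤) {a : Fin n → K}
    (ha : ∀ M ∈ C, M *ᵥ a = 0) : a = 0 := by
  have hle : rowSupport C ≤ perp a := by
    refine iSup₂_le fun M hM => Submodule.span_le.2 ?_
    rintro _ ⟨i, rfl⟩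
    change a ⬝ᵥ M i = 0
    rw [dotProduct_comm]
    exact congrFun (ha M hM) i
  refine dotProduct_eq_zero a fun v => ?_
  exact (hC ▸ hle) (Submodule.mem_top (x := v))

/-- Every faithful (column- and row-nondegenerate) matrix rank-metric code
over a finite field contains a codeword of maximum possible rank `min{m,n}`. -/
theorem stmt13 {F : Type*} [Field F] [Fintype F] {m n k : ℕ}
    (hm : 0 < m) (hn : 0 < n) (hk : 0 < k)
    (B : Fin k → Matrix (Fin m) (Fin n) F) (hB : LinearIndependent F B)
    (C : Submodule F (Matrix (Fin m) (Fin n) F))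
    (hC : C = Submodule.span F (Set.range B))
    (hcolnd : rowSupport C = ⊤) (hrownd : colSupport C = ⊤)
    (S : Submodule F (Matrix (Fin k) (Fin m) F))
    (hS : S = Submodule.span F (Set.range (colSlices B)))
    (hfaithful : ∀ X ∈ S, X ≠ 0 → X.rank = m) :
    ∃ M ∈ C, M.rank = min m n := by
  refine exists_rank_eq_min_of_transitive C fun a ha y => ?_
  have hX : (∑ l, a l • colSlices B l) ≠ 0 := fun h0 => ha <| by
    refine eq_zero_of_rowSupport_eq_top hcolnd fun M hM => ?_
    rw [hC] at hM
    induction hM using Submodule.span_induction with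
    | mem M hM =>
      obtain ⟨i, rfl⟩ := hM
      rw [← sum_smul_colSlices_apply, h0]
      rfl
    | zero => exact Matrix.zero_mulVec a
    | add M N _ _ hM hN => rw [Matrix.add_mulVec, hM, hN, add_zero]
    | smul c M _ hM => rw [Matrix.smul_mulVec, hM, smul_zero]
  have hrank := hfaithful _ (hS ▸ Submodule.sum_mem _ fun l _ =>
    Submodule.smul_mem _ (a l) (Submodule.subset_span ⟨l, rfl⟩)) hX
  rw [← Matrix.rank_transpose, Matrix.rank] at hrank
  have htop := Submodule.eq_top_of_finrank_eq (hrank.trans (Module.finrank_fin_fun F).symm)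
  obtain ⟨u, hu⟩ := LinearMap.range_eq_top.1 htop y
  refine ⟨∑ i, u i • B i, hC ▸ Submodule.sum_mem _ fun i _ =>
    Submodule.smul_mem _ (u i) (Submodule.subset_span ⟨i, rfl⟩), ?_⟩
  rw [← hu, Matrix.mulVecLin_apply, Matrix.mulVec_transpose, Matrix.sum_mulVec,
    Matrix.vecMul_eq_sum]
  simp only [sum_smul_colSlices_apply, Matrix.smul_mulVec]
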